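/- For all α, β, γ > 0, b(α,β,γ) + b(γ,β,α) ≥ 0.08 · β · (log(αγ/β²))², where b(α,β,γ) := ∂₁θ_log(β,γ)·α + ∂₂θ_log(β,γ)·β − θ_log(α,β). -/

import Mathlib

open Real

noncomputable def thetaLog (r s : ℝ) : ℝ := ∫ p in (0:ℝ)..1, r ^ (1 - p) * s ^ p

noncomputable def dtheta1 (r s : ℝ) : ℝ := deriv (fun u : ℝ => thetaLog u s) r

noncomputable def dtheta2 (r s : ℝ) : ℝ := deriv (fun v : ℝ => thetaLog r v) s

noncomputable def bfun (a b c : ℝ) : ℝ := dtheta1 b c * a + dtheta2 b c * b - thetaLog a b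

noncomputable def b0fun (a b c : ℝ) : ℝ := dtheta1 b c * a + dtheta2 b c * b

lemma taylor_exp_weighted_le {n : ℝ} (hn : 0 ≤ n) :
    1 / 6 + n ^ 2 / 120 + n ^ 4 / 5040 ≤ (1 + n + n ^ 2 / 2 + n ^ 3 / 6 + n ^ 4 / 24) *
      (1 / 6 + n ^ 2 / 120 + n ^ 4 / 5040 - 8 / 100 * n) := by
  rcases le_total n 2 with h | h
  · nlinarith [mul_nonneg hn (sq_nonneg n), mul_nonneg hn (sq_nonneg (n - 1)),
      mul_nonneg hn (sq_nonneg (n * (n - 2))), mul_nonneg hn (sq_nonneg (n ^ 2 * (n - 2))),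
      mul_nonneg hn (sq_nonneg (n ^ 2)), mul_nonneg hn (sub_nonneg.2 h),
      mul_nonneg (mul_nonneg hn (sub_nonneg.2 h)) hn]
  · obtain ⟨t, rfl⟩ : ∃ t, n = 3 + t := ⟨n - 3, by ring⟩
    have h : 0 ≤ t + 1 := by linarith
    nlinarith [sq_nonneg t, mul_nonneg h (sq_nonneg t), mul_nonneg h (sq_nonneg (t ^ 2)),
      mul_nonneg h (sq_nonneg (t ^ 3)), sq_nonneg (t ^ 2), sq_nonneg (t ^ 3)]

lemma taylor_le_sinh {n : ℝ} (hn : 0 ≤ n) :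
    n + n ^ 3 / 6 + n ^ 5 / 120 + n ^ 7 / 5040 ≤ sinh n := by
  have := sum_le_hasSum (Finset.range 4) (fun i _ => by positivity) (Real.hasSum_sinh n)
  simp only [Finset.sum_range_succ, Finset.sum_range_zero, Nat.factorial] at this
  norm_num at this
  linarith

lemma taylor_le_exp {n : ℝ} (hn : 0 ≤ n) :
    1 + n + n ^ 2 / 2 + n ^ 3 / 6 + n ^ 4 / 24 ≤ exp n := by
  have := Real.sum_le_exp_of_nonneg hn 5
  simp only [Finset.sum_range_succ, Finset.sum_range_zero, Nat.factorial] at this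
  norm_num at this
  linarith

/-- The one-variable inequality behind the constant `0.08`. -/
lemma pow_four_le_exp_sub_one_mul_sinh_sub (m : ℝ) :
    8 / 100 * m ^ 4 ≤ (exp m - 1) * (sinh m - m) := by
  rcases le_total 0 m with hm | hm
  · have h1 : m ≤ exp m - 1 := by linarith [add_one_le_exp m]
    have h2 : m ^ 3 / 6 ≤ sinh m - m := by
      have := taylor_le_sinh hm
      have : 0 ≤ m ^ 5 := by positivity
      have : 0 ≤ m ^ 7 := by positivity
      linarith
    have h3 := mul_le_mul h1 h2 (by positivity) (hm.trans h1)
    have : 0 ≤ m ^ 4 := by positivity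
    linarith
  · obtain ⟨n, rfl⟩ : ∃ n, m = -n := ⟨-m, by ring⟩
    have hn : 0 ≤ n := by linarith
    rw [sinh_neg]
    set P := 1 / 6 + n ^ 2 / 120 + n ^ 4 / 5040 with hP
    have hP0 : 0 < P := by positivity
    have hT := taylor_le_exp hn
    have h1 := taylor_exp_weighted_le hn
    rw [← hP] at h1
    have h2 : 0 ≤ P - 8 / 100 * n :=
      le_of_lt (pos_of_mul_pos_right (hP0.trans_le h1) (by positivity))
    have h3 : P ≤ exp n * (P - 8 / 100 * n) := h1.trans (mul_le_mul_of_nonneg_right hT h2)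
    have h4 : P * exp (-n) ≤ P - 8 / 100 * n := by
      have := mul_le_mul_of_nonneg_right h3 (exp_pos (-n)).le
      have he : exp n * exp (-n) = 1 := by rw [← exp_add]; simp
      calc _ ≤ _ := this
        _ = (exp n * exp (-n)) * (P - 8 / 100 * n) := by ring
        _ = _ := by rw [he, one_mul]
    have h5 : n ^ 3 * P ≤ sinh n - n := by
      have := taylor_le_sinh hn
      rw [hP]; linarith
    have h6 : 0 ≤ 1 - exp (-n) := by
      have : exp (-n) ≤ 1 := exp_le_one_iff.2 hm
      linarith
    have h7 := mul_le_mul_of_nonneg_left h5 h6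
    have h8 : 0 ≤ n ^ 3 * (P - 8 / 100 * n - P * exp (-n)) :=
      mul_nonneg (by positivity) (by linarith)
    linarith

lemma hasDerivAt_integral_exp_mul (u : ℝ) :
    HasDerivAt (fun u : ℝ => ∫ p in (0:ℝ)..1, exp (p * u))
      (∫ p in (0:ℝ)..1, p * exp (p * u)) u := by
  refine (intervalIntegral.hasDerivAt_integral_of_dominated_loc_of_deriv_le
    (F := fun u p => exp (p * u)) (F' := fun u p => p * exp (p * u))
    (bound := fun _ => exp (|u| + 1)) (Metric.ball_mem_nhds u one_pos)
    (Filter.Eventually.of_forall fun v => (by fun_prop : Continuous _).aestronglyMeasurable)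
    ((by fun_prop : Continuous _).intervalIntegrable _ _)
    (by fun_prop : Continuous _).aestronglyMeasurable
    (Filter.Eventually.of_forall fun p hp v hv => ?_)
    intervalIntegrable_const
    (Filter.Eventually.of_forall fun p _ v _ => ?_)).2
  · rw [Set.uIoc_of_le zero_le_one] at hp
    have hv' : |v| ≤ |u| + 1 := by
      rw [Metric.mem_ball, Real.dist_eq] at hv
      have := abs_sub_abs_le_abs_sub v u
      linarith
    have h1 : p * v ≤ |u| + 1 :=
      calc p * v ≤ p * |v| := mul_le_mul_of_nonneg_left (le_abs_self v) hp.1.le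
        _ ≤ 1 * |v| := mul_le_mul_of_nonneg_right hp.2 (abs_nonneg v)
        _ ≤ _ := by linarith
    rw [norm_mul, Real.norm_eq_abs, Real.norm_eq_abs, abs_of_pos hp.1, abs_exp]
    calc p * exp (p * v) ≤ 1 * exp (p * v) := mul_le_mul_of_nonneg_right hp.2 (exp_pos _).le
      _ ≤ _ := by rw [one_mul]; exact exp_le_exp.2 h1
  · simpa [mul_comm] using ((hasDerivAt_id v).const_mul p).exp

lemma thetaLog_eq_mul_integral_exp {r s : ℝ} (hr : 0 < r) (hs : 0 < s) :
    thetaLog r s = r * ∫ p in (0:ℝ)..1, exp (p * (log s - log r)) := by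
  rw [thetaLog, ← intervalIntegral.integral_const_mul]
  congr 1 with p
  rw [rpow_def_of_pos hr, rpow_def_of_pos hs, ← exp_add]
  nth_rewrite 2 [← exp_log hr]
  rw [← exp_add]
  ring_nf

lemma dtheta1_eq {r s : ℝ} (hr : 0 < r) (hs : 0 < s) :
    dtheta1 r s = (∫ p in (0:ℝ)..1, exp (p * (log s - log r)))
      - ∫ p in (0:ℝ)..1, p * exp (p * (log s - log r)) := by
  have h : HasDerivAt (fun u : ℝ => u * ∫ p in (0:ℝ)..1, exp (p * (log s - log u)))
      (1 * (∫ p in (0:ℝ)..1, exp (p * (log s - log r))) +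
        r * ((∫ p in (0:ℝ)..1, p * exp (p * (log s - log r))) * (-r⁻¹))) r :=
    (hasDerivAt_id r).mul (HasDerivAt.comp (h₂ := fun u => ∫ p in (0:ℝ)..1, exp (p * u)) r
      (hasDerivAt_integral_exp_mul (log s - log r)) ((hasDerivAt_log hr.ne').const_sub (log s)))
  have he : (fun u : ℝ => thetaLog u s) =ᶠ[nhds r]
      fun u : ℝ => u * ∫ p in (0:ℝ)..1, exp (p * (log s - log u)) := by
    filter_upwards [lt_mem_nhds hr] with u hu
    exact thetaLog_eq_mul_integral_exp hu hs
  rw [dtheta1, he.deriv_eq, h.deriv, one_mul, mul_neg, mul_neg, mul_left_comm, mul_inv_cancel₀ hr.ne',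
    mul_one, ← sub_eq_add_neg]

lemma dtheta2_eq {r s : ℝ} (hr : 0 < r) (hs : 0 < s) :
    dtheta2 r s = r / s * ∫ p in (0:ℝ)..1, p * exp (p * (log s - log r)) := by
  have h : HasDerivAt (fun v : ℝ => r * ∫ p in (0:ℝ)..1, exp (p * (log v - log r)))
      (r * ((∫ p in (0:ℝ)..1, p * exp (p * (log s - log r))) * s⁻¹)) s :=
    (HasDerivAt.comp (h₂ := fun u => ∫ p in (0:ℝ)..1, exp (p * u)) s
      (hasDerivAt_integral_exp_mul (log s - log r))
      ((hasDerivAt_log hs.ne').sub_const (log r))).const_mul r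
  have he : (fun v : ℝ => thetaLog r v) =ᶠ[nhds s]
      fun v : ℝ => r * ∫ p in (0:ℝ)..1, exp (p * (log v - log r)) := by
    filter_upwards [lt_mem_nhds hs] with v hv
    exact thetaLog_eq_mul_integral_exp hr hv
  rw [dtheta2, he.deriv_eq, h.deriv]
  ring

lemma bfun_mul_exp {b : ℝ} (hb : 0 < b) (x z : ℝ) :
    bfun (b * exp x) b (b * exp z) = b * ∫ p in (0:ℝ)..1,
      (p * exp (x + (1 - p) * z) + (1 - p) * exp (-p * z) - exp (p * x)) := by
  have hx : 0 < b * exp x := by positivity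
  have hz : 0 < b * exp z := by positivity
  have lx : log b - log (b * exp x) = -x := by
    rw [log_mul hb.ne' (exp_pos x).ne', log_exp]; ring
  have lz : log (b * exp z) - log b = z := by
    rw [log_mul hb.ne' (exp_pos z).ne', log_exp]; ring
  rw [bfun, dtheta1_eq hb hz, dtheta2_eq hb hz, thetaLog_eq_mul_integral_exp hx hb, lx, lz]
  have hsub : (∫ p in (0:ℝ)..1,
      (p * exp (x + (1 - p) * z) + (1 - p) * exp (-p * z) - exp (p * x))) =
      ∫ p in (0:ℝ)..1, (exp x * (exp (p * z) - p * exp (p * z)) +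
        exp (-z) * (p * exp (p * z)) - exp x * exp (p * -x)) := by
    have := intervalIntegral.integral_comp_sub_left (a := 0) (b := 1)
      (fun p : ℝ => p * exp (x + (1 - p) * z) + (1 - p) * exp (-p * z) - exp (p * x)) 1
    simp only [sub_self, sub_zero] at this
    rw [← this]
    congr 1 with p
    have e1 : exp (x + (1 - (1 - p)) * z) = exp x * exp (p * z) := by rw [← exp_add]; ring_nf
    have e2 : exp (-(1 - p) * z) = exp (-z) * exp (p * z) := by rw [← exp_add]; ring_nf
    have e3 : exp ((1 - p) * x) = exp x * exp (p * -x) := by rw [← exp_add]; ring_nf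
    rw [e1, e2, e3]; ring
  have I1 : IntervalIntegrable (fun p : ℝ => exp (p * z)) MeasureTheory.volume 0 1 :=
    (by fun_prop : Continuous _).intervalIntegrable _ _
  have I2 : IntervalIntegrable (fun p : ℝ => p * exp (p * z)) MeasureTheory.volume 0 1 :=
    (by fun_prop : Continuous _).intervalIntegrable _ _
  have I3 : IntervalIntegrable (fun p : ℝ => exp (p * -x)) MeasureTheory.volume 0 1 :=
    (by fun_prop : Continuous _).intervalIntegrable _ _
  rw [hsub, intervalIntegral.integral_sub
      (((I1.sub I2).const_mul _).add (I2.const_mul _)) (I3.const_mul _),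
    intervalIntegral.integral_add ((I1.sub I2).const_mul _) (I2.const_mul _),
    intervalIntegral.integral_const_mul, intervalIntegral.integral_const_mul,
    intervalIntegral.integral_const_mul, intervalIntegral.integral_sub I1 I2]
  have hbz : b / (b * exp z) = exp (-z) := by
    rw [exp_neg]; field_simp
  rw [hbz]; ring

/-- Convexity of `exp` at the points `(2 - p) * m` and `-p * m`, whose mean is `p * m`. -/
lemma jensen_gap_exp_nonneg {p : ℝ} (hp0 : 0 ≤ p) (hp1 : p ≤ 1) (m : ℝ) :
    0 ≤ p * exp ((2 - p) * m) + (1 - p) * exp (-p * m) - exp (p * m) := by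
  have := convexOn_exp.2 (Set.mem_univ ((2 - p) * m)) (Set.mem_univ (-p * m)) hp0
    (sub_nonneg.2 hp1) (by ring)
  simp only [smul_eq_mul] at this
  rw [show p * ((2 - p) * m) + (1 - p) * (-p * m) = p * m by ring] at this
  linarith

lemma integral_jensen_gap_exp {m : ℝ} (hm : m ≠ 0) :
    ∫ p in (0:ℝ)..1, (p * exp ((2 - p) * m) + (1 - p) * exp (-p * m) - exp (p * m)) =
      2 * ((exp m - 1) * (sinh m - m)) / m ^ 2 := by
  have hd : ∀ p ∈ Set.uIcc (0:ℝ) 1, HasDerivAt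
      (fun p : ℝ => (-p / m - 1 / m ^ 2) * exp ((2 - p) * m) +
        (-1 / m + p / m + 1 / m ^ 2) * exp (-p * m) - exp (p * m) / m)
      (p * exp ((2 - p) * m) + (1 - p) * exp (-p * m) - exp (p * m)) p := by
    intro p _
    have i := hasDerivAt_id p
    have h1 := ((i.neg.div_const m).sub_const (1 / m ^ 2)).mul ((i.const_sub 2).mul_const m).exp
    have h2 := (((i.div_const m).const_add (-1 / m)).add_const (1 / m ^ 2)).mul
      (i.neg.mul_const m).exp
    have h3 := (i.mul_const m).exp.div_const m
    refine HasDerivAt.congr_deriv ((h1.add h2).sub h3) ?_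
    simp only [id, Pi.neg_apply]
    field_simp
    ring
  rw [intervalIntegral.integral_eq_sub_of_hasDerivAt hd
    ((by fun_prop : Continuous _).intervalIntegrable _ _)]
  have e1 : exp ((2 - 0) * m) = exp m * exp m := by rw [← exp_add]; ring_nf
  have e2 : exp ((2 - 1) * m) = exp m := by ring_nf
  have e3 : exp (-1 * m) = (exp m)⁻¹ := by rw [← exp_neg]; ring_nf
  rw [e1, e2, e3, sinh_eq, exp_neg]
  simp only [one_mul, zero_mul, neg_zero, exp_zero]
  field_simp
  ring

lemma sq_le_integral_jensen_gap_exp (m : ℝ) :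
    16 / 100 * m ^ 2 ≤
      ∫ p in (0:ℝ)..1, (p * exp ((2 - p) * m) + (1 - p) * exp (-p * m) - exp (p * m)) := by
  rcases eq_or_ne m 0 with rfl | hm
  · simp
  · rw [integral_jensen_gap_exp hm, le_div_iff₀ (by positivity)]
    linarith [pow_four_le_exp_sub_one_mul_sinh_sub m]

lemma bfun_sum_lower_mul_exp {b : ℝ} (hb : 0 < b) (m d : ℝ) :
    b * (32 / 100 * m ^ 2) ≤ bfun (b * exp (m + d)) b (b * exp (m - d)) +
      bfun (b * exp (m - d)) b (b * exp (m + d)) := by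
  rw [bfun_mul_exp hb, bfun_mul_exp hb, ← mul_add, ← intervalIntegral.integral_add
    ((by fun_prop : Continuous _).intervalIntegrable _ _)
    ((by fun_prop : Continuous _).intervalIntegrable _ _)]
  refine mul_le_mul_of_nonneg_left ?_ hb.le
  calc 32 / 100 * m ^ 2 = 2 * (16 / 100 * m ^ 2) := by ring
    _ ≤ 2 * ∫ p in (0:ℝ)..1, (p * exp ((2 - p) * m) + (1 - p) * exp (-p * m) - exp (p * m)) :=
        mul_le_mul_of_nonneg_left (sq_le_integral_jensen_gap_exp m) zero_le_two
    _ ≤ _ := by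
        rw [← intervalIntegral.integral_const_mul]
        refine intervalIntegral.integral_mono_on zero_le_one
          ((by fun_prop : Continuous _).intervalIntegrable _ _)
          ((by fun_prop : Continuous _).intervalIntegrable _ _) fun p hp => ?_
        have hg := jensen_gap_exp_nonneg hp.1 hp.2 m
        have hc : 2 ≤ exp (p * d) + exp (-(p * d)) := by
          have := one_le_cosh (p * d)
          rw [cosh_eq] at this
          linarith
        have e1 : exp (m + d + (1 - p) * (m - d)) = exp ((2 - p) * m) * exp (p * d) := by
          rw [← exp_add]; ring_nf
        have e2 : exp (m - d + (1 - p) * (m + d)) = exp ((2 - p) * m) * exp (-(p * d)) := by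
          rw [← exp_add]; ring_nf
        have e3 : exp (-p * (m - d)) = exp (-p * m) * exp (p * d) := by
          rw [← exp_add]; ring_nf
        have e4 : exp (-p * (m + d)) = exp (-p * m) * exp (-(p * d)) := by
          rw [← exp_add]; ring_nf
        have e5 : exp (p * (m + d)) = exp (p * m) * exp (p * d) := by
          rw [← exp_add]; ring_nf
        have e6 : exp (p * (m - d)) = exp (p * m) * exp (-(p * d)) := by
          rw [← exp_add]; ring_nf
        rw [e1, e2, e3, e4, e5, e6]
        have := mul_le_mul_of_nonneg_right hc hg
        linarith

theorem bfun_sum_lower (a b c : ℝ) (ha : 0 < a) (hb : 0 < b) (hc : 0 < c) :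
    bfun a b c + bfun c b a ≥ 0.08 * b * (Real.log (a * c / b ^ 2)) ^ 2 := by
  obtain ⟨x, rfl⟩ : ∃ x, a = b * exp x :=
    ⟨log (a / b), by rw [exp_log (by positivity)]; field_simp⟩
  obtain ⟨z, rfl⟩ : ∃ z, c = b * exp z :=
    ⟨log (c / b), by rw [exp_log (by positivity)]; field_simp⟩
  have hl : log (b * exp x * (b * exp z) / b ^ 2) = x + z := by
    rw [show b * exp x * (b * exp z) / b ^ 2 = exp (x + z) by rw [exp_add]; field_simp, log_exp]
  have h := bfun_sum_lower_mul_exp hb ((x + z) / 2) ((x - z) / 2)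
  rw [show (x + z) / 2 + (x - z) / 2 = x by ring, show (x + z) / 2 - (x - z) / 2 = z by ring] at h
  rw [hl]
  refine le_trans (le_of_eq ?_) h
  ring
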